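/- Let (G, 𝒟, π) be an instance of Submodular Prize-Collecting Steiner Forest, let F be a forest in G satisfying all the demands of 𝒟, and let ε > 0. Then there exist trees T̂_1, …, T̂_k in G and a partition {𝒟_1, …, 𝒟_k} of 𝒟 such that: (1) 𝒟 = ⋃_{i=1}^k 𝒟_i; (2) for each i, the tree T̂_i contains both endpoints of every demand in 𝒟_i; (3) Σ_{i=1}^k length(T̂_i) ≤ (2/ε + 1)·length(F); and (4) for any minimum-cost subgraph of the instance, letting 𝒟* be the set of demands it satisfies and 𝒟*_i := 𝒟* ∩ 𝒟_i, one has Σ_{i=1}^k SteinerForest(G, 𝒟*_i) ≤ (1 + ε)·SteinerForest(G, 𝒟*). -/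

import Mathlib

/-!
The trees of `F` are contracted to points, and the point of a tree `T` receives the potential
`length(T) / ε`, so that the potentials add up to `length(F) / ε`. A prize-collecting clustering
(`IsPCClustering`) for these potentials is an edge set `F₂` of length at most twice the total
potential such that every edge set `H` can pay for the potentials of a set `B` of points with the
following property: outside `B`, whatever `H` connects is also connected by `F₂`. The trees `T̂_i`
are spanning trees of the components of `F ∪ F₂`, of total length at most
`length(F) + (2 / ε) length(F)`, and `𝒟_i` consists of the demands lying in `T̂_i`.

Let `H` be an optimal Steiner forest for `𝒟*`. A demand in a tree of `F` that belongs to `B` is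
satisfied by buying that tree; all these trees together cost `ε` times the potential of `B`, hence
at most `ε · length(H)`. Every other satisfied demand lies in a component of `H` touching a tree
outside `B`, and all trees outside `B` touched by one component of `H` lie in the same `T̂_i`, so
each component of `H` is needed for only one `i` (`exists_trees`).

Clusterings exist (`exists_pcClustering`) by the moat-growing argument of Goemans and Williamson,
written as an induction on the instance. An edge of length zero is contracted (`contract_step`).
If there is none, a moat of width `δ` is grown around every vertex of positive potential
(`grow_step`): each such potential drops by `δ`, and each edge becomes shorter by `δ` for each of its
endpoints of positive potential, `δ` being chosen so that a potential or a length reaches zero. A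
clustering of the reduced instance may be taken to be a forest without leaves of potential zero
(`exists_pruned`), and in such a forest the vertices of positive potential have average degree at
most two (`sum_degree_le`); so its length in the original instance is larger by at most `2 δ` per
such vertex, which is twice the drop in potential. Dually, an edge set `H` becomes longer by at
least `δ` for each such vertex that it touches, which pays for the potentials of `B`.
-/

open scoped Classical

noncomputable section

variable {V : Type*} [Fintype V] [DecidableEq V]

/-- Subgraph `F` satisfies demand `d`: its endpoints lie in a common connected component. -/
def Satisfies {G : SimpleGraph V} (F : G.Subgraph) (d : V × V) : Prop :=
  F.spanningCoe.Reachable d.1 d.2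

/-- Total length of the edges of the subgraph `F`, w.r.t. edge lengths `c`. -/
def sgLength {G : SimpleGraph V} (c : Sym2 V → ℝ) (F : G.Subgraph) : ℝ :=
  ∑ e ∈ (Set.toFinite F.edgeSet).toFinset, c e

/-- The cost of a subgraph `F` for the instance `(G, c, 𝒟, π)`:
its total edge length plus the penalty of its unsatisfied demands. -/
def cost (G : SimpleGraph V) (c : Sym2 V → ℝ) (𝒟 : Finset (V × V))
    (π : Finset (V × V) → ℝ) (F : G.Subgraph) : ℝ :=
  sgLength c F + π (𝒟.filter fun d => ¬ Satisfies F d)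

/-- `SteinerForest(G, D)`: the minimum total edge length of a subgraph of `G`
satisfying every demand in `D`. -/
def SteinerForest (G : SimpleGraph V) (c : Sym2 V → ℝ) (D : Finset (V × V)) : ℝ :=
  sInf {x | ∃ F : G.Subgraph, (∀ d ∈ D, Satisfies F d) ∧ x = sgLength c F}

/-! ### Connectivity of edge sets in a multigraph -/

/-- The vertices `a` and `b` are connected by the edge set `F` of the multigraph with vertex
type `W`, edge type `E` and endpoint maps `s`, `t`. Loops and parallel edges are allowed, so that
contracting an edge only changes the endpoint maps. -/
def Conn {W E : Type*} (s t : E → W) (F : Finset E) : W → W → Prop :=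
  Relation.EqvGen fun a b => ∃ e ∈ F, s e = a ∧ t e = b

section Multigraph

variable {W E : Type*} {s t : E → W}

lemma conn_equiv (F : Finset E) : Equivalence (Conn s t F) :=
  Relation.EqvGen.is_equivalence _

lemma conn_edge {F : Finset E} {e : E} (he : e ∈ F) : Conn s t F (s e) (t e) :=
  Relation.EqvGen.rel _ _ ⟨e, he, rfl, rfl⟩

/-- Universal property of connectivity: a map to a type with an equivalence relation that respects
the edges respects connectivity. -/
lemma Conn.lift {X : Type*} {R : X → X → Prop} (hR : Equivalence R) (p : W → X) {F : Finset E}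
    (h : ∀ e ∈ F, R (p (s e)) (p (t e))) {a b : W} (hab : Conn s t F a b) : R (p a) (p b) := by
  induction hab with
  | rel x y hxy => obtain ⟨e, he, rfl, rfl⟩ := hxy; exact h e he
  | refl x => exact hR.refl _
  | symm x y _ ih => exact hR.symm ih
  | trans x y z _ _ h1 h2 => exact hR.trans h1 h2

lemma Conn.mono {F F' : Finset E} (h : F ⊆ F') {a b : W} (hab : Conn s t F a b) :
    Conn s t F' a b :=
  Conn.lift (conn_equiv F') (fun x : W => x) (fun _ he => conn_edge (h he)) hab

/-- Incidence indicator: `1` if `v` is an endpoint of the edge `e` and `e` is not a loop. -/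
def inc (s t : E → W) (e : E) (v : W) : ℕ :=
  if s e ≠ t e ∧ (s e = v ∨ t e = v) then 1 else 0

lemma inc_pos {e : E} {v : W} : 0 < inc s t e v ↔ s e ≠ t e ∧ (s e = v ∨ t e = v) := by
  unfold inc; split_ifs with h <;> simp [h]

/-- A vertex of degree zero is connected only to itself. -/
lemma Conn.eq_of_isolated {F : Finset E} {a b : W} (ha : ∑ e ∈ F, inc s t e a = 0)
    (hab : Conn s t F a b) : b = a := by
  have h := Conn.lift (R := Iff) (⟨Iff.refl, Iff.symm, Iff.trans⟩) (fun x => x = a)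
    (F := F) (s := s) (t := t) (fun e he => by
      have h0 : ¬ 0 < inc s t e a := by
        have := Finset.sum_eq_zero_iff.1 ha e he
        omega
      rw [inc_pos] at h0
      grind) hab
  exact h.1 rfl

lemma sum_inc_le [Fintype W] (e : E) : ∑ v, inc s t e v ≤ 2 := by
  have : ∀ v, inc s t e v ≤ (if s e = v then 1 else 0) + (if t e = v then 1 else 0) := by
    intro v; unfold inc; grind
  calc _ ≤ ∑ v, ((if s e = v then 1 else 0) + (if t e = v then 1 else 0)) :=
        Finset.sum_le_sum fun v _ => this v
    _ = 2 := by simp [Finset.sum_add_distrib]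

/-- Every edge set contains a spanning forest, here described by its number of edges and of
components. -/
lemma exists_forest [Fintype W] (F : Finset E) :
    ∃ F' ⊆ F, (∀ a b, Conn s t F a b → Conn s t F' a b) ∧
      F'.card + Nat.card (Quotient (Setoid.mk _ (conn_equiv (s := s) (t := t) F')))
        ≤ Fintype.card W := by
  induction F using Finset.induction with
  | empty =>
    refine ⟨∅, le_rfl, fun _ _ h => h, ?_⟩
    rw [Finset.card_empty, zero_add, ← Nat.card_eq_fintype_card]
    exact Nat.card_le_card_of_surjective _ Quotient.mk_surjective
  | insert e F he ih =>
    obtain ⟨F', hF', hc, hcard⟩ := ih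
    by_cases hst : Conn s t F' (s e) (t e)
    · refine ⟨F', hF'.trans (Finset.subset_insert _ _), fun a b hab => ?_, hcard⟩
      refine hab.lift (conn_equiv _) (id : W → W) fun e' he' => ?_
      rcases Finset.mem_insert.1 he' with rfl | h
      · exact hst
      · exact hc _ _ (conn_edge h)
    · refine ⟨insert e F', Finset.insert_subset_insert _ hF', fun a b hab => ?_, ?_⟩
      · refine hab.lift (conn_equiv _) (id : W → W) fun e' he' => ?_
        rcases Finset.mem_insert.1 he' with rfl | h
        · exact conn_edge (Finset.mem_insert_self _ _)
        · exact (hc _ _ (conn_edge h)).mono (Finset.subset_insert _ _)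
      · have heF : e ∉ F' := fun h => he (hF' h)
        rw [Finset.card_insert_of_notMem heF]
        -- the new edge joins two different components, so their number drops
        have hlt : Nat.card (Quotient (Setoid.mk _ (conn_equiv (s := s) (t := t) (insert e F'))))
            < Nat.card (Quotient (Setoid.mk _ (conn_equiv (s := s) (t := t) F'))) := by
          rw [Nat.card_eq_fintype_card, Nat.card_eq_fintype_card]
          refine Fintype.card_lt_of_surjective_not_injective
            (Quotient.map' (s₁ := Setoid.mk _ (conn_equiv (s := s) (t := t) F'))
              (s₂ := Setoid.mk _ (conn_equiv (s := s) (t := t) (insert e F'))) id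
              fun a b hab => Conn.mono (Finset.subset_insert _ _) hab) ?_ ?_
          · intro q
            induction q using Quotient.inductionOn with
            | h a => exact ⟨Quotient.mk _ a, rfl⟩
          · intro hinj
            have := @hinj (Quotient.mk _ (s e)) (Quotient.mk _ (t e))
              (Quotient.sound (conn_edge (Finset.mem_insert_self _ _)))
            exact hst (Quotient.exact this)
        omega

/-- In a forest all of whose leaves lie in `A`, the average degree over `A` is at most two. -/
lemma sum_degree_le [Fintype W] (F : Finset E) (A : Finset W)
    (hF : F.card + Nat.card (Quotient (Setoid.mk _ (conn_equiv (s := s) (t := t) F)))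
      ≤ Fintype.card W)
    (hA : ∀ v ∉ A, ∑ e ∈ F, inc s t e v ≠ 1) :
    ∑ v ∈ A, ∑ e ∈ F, inc s t e v ≤ 2 * A.card := by
  set d : W → ℕ := fun v => ∑ e ∈ F, inc s t e v with hd
  set I : Finset W := Finset.univ.filter fun v => d v = 0 with hI
  -- the isolated vertices are components of their own
  have h1 : I.card ≤ Nat.card (Quotient (Setoid.mk _ (conn_equiv (s := s) (t := t) F))) := by
    rw [← Fintype.card_coe, ← Nat.card_eq_fintype_card]
    refine Nat.card_le_card_of_injective (fun v : I => Quotient.mk _ v.1) ?_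
    rintro ⟨v, hv⟩ ⟨w, hw⟩ hvw
    have h2 : Conn s t F v w := Quotient.exact hvw
    exact Subtype.ext (h2.eq_of_isolated (Finset.mem_filter.1 hv).2).symm
  have h2 : ∑ v, d v ≤ 2 * F.card := by
    rw [hd, Finset.sum_comm]
    calc _ ≤ ∑ e ∈ F, 2 := Finset.sum_le_sum fun e _ => sum_inc_le e
      _ = _ := by simp [mul_comm]
  have h3 : I.card + (Finset.univ.filter fun v => ¬ d v = 0).card = Fintype.card W := by
    rw [hI, Finset.card_filter_add_card_filter_not]; rfl
  have h4 : ∑ v, d v + 2 * I.card ≤ 2 * Fintype.card W := by omega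
  have h5 : 2 * Fintype.card W ≤ ∑ v ∈ Aᶜ, d v + 2 * I.card + 2 * A.card := by
    have h6 : (2 * Aᶜ.card) ≤ ∑ v ∈ Aᶜ, d v + 2 * I.card := by
      have : (I.card) = ∑ v, if d v = 0 then 1 else 0 := by simp [hI]
      rw [this]
      have h7 : (∑ v ∈ Aᶜ, if d v = 0 then 1 else 0) ≤ ∑ v, if d v = 0 then 1 else 0 :=
        Finset.sum_le_sum_of_subset (Finset.subset_univ _)
      have h8 : ∑ v ∈ Aᶜ, 2 ≤ ∑ v ∈ Aᶜ, (d v + 2 * if d v = 0 then 1 else 0) := by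
        refine Finset.sum_le_sum fun v hv => ?_
        have := hA v (Finset.mem_compl.1 hv)
        change d v ≠ 1 at this
        split_ifs <;> omega
      rw [Finset.sum_add_distrib, ← Finset.mul_sum] at h8
      simp only [Finset.sum_const, smul_eq_mul] at h8
      omega
    have := Finset.card_add_card_compl A
    omega
  have h6 : ∑ v ∈ A, d v + ∑ v ∈ Aᶜ, d v = ∑ v, d v := Finset.sum_add_sum_compl A d
  change ∑ v ∈ A, d v ≤ _
  omega

/-! ### Prize-collecting clustering -/

/-- The edge set `F` is a prize-collecting clustering for edge lengths `c` and potentials `φ`: it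
costs at most twice the total potential, and every edge set `H` can pay for the potentials of a set
`B` of vertices such that, outside `B`, whatever is connected by `H` is connected by `F`. -/
def IsPCClustering [Fintype W] (s t : E → W) (c : E → ℝ) (φ : W → ℝ) (F : Finset E) : Prop :=
  ∑ e ∈ F, c e ≤ 2 * ∑ v, φ v ∧
    ∀ H : Finset E, ∃ B : Finset W, ∑ v ∈ B, φ v ≤ ∑ e ∈ H, c e ∧
      ∀ u v, u ∉ B → v ∉ B → Conn s t H u v → Conn s t F u v

/-- A clustering of minimum cardinality is a forest none of whose leaves has potential zero:
redundant edges and edges to such leaves could be removed. -/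
lemma exists_pruned [Fintype W] [Fintype E] {c : E → ℝ} {φ : W → ℝ} (hc : ∀ e, 0 ≤ c e)
    (h : ∃ F, IsPCClustering s t c φ F) :
    ∃ F, IsPCClustering s t c φ F ∧
      F.card + Nat.card (Quotient (Setoid.mk _ (conn_equiv (s := s) (t := t) F)))
        ≤ Fintype.card W ∧
      ∀ v, φ v = 0 → ∑ e ∈ F, inc s t e v ≠ 1 := by
  obtain ⟨F, hF, hmin⟩ := Finset.exists_min_image
    (Finset.univ.filter fun F => IsPCClustering s t c φ F) Finset.card
    (by obtain ⟨F, hF⟩ := h; exact ⟨F, by simpa using hF⟩)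
  simp only [Finset.mem_filter, Finset.mem_univ, true_and] at hF hmin
  refine ⟨F, hF, ?_, fun v hv hdeg => ?_⟩
  · obtain ⟨F', hsub, hconn, hcard⟩ := exists_forest (s := s) (t := t) F
    have hF' : IsPCClustering s t c φ F' := by
      refine ⟨(Finset.sum_le_sum_of_subset_of_nonneg hsub fun e _ _ => hc e).trans hF.1,
        fun H => ?_⟩
      obtain ⟨B, hB, hB'⟩ := hF.2 H
      exact ⟨B, hB, fun u v hu hv huv => hconn _ _ (hB' u v hu hv huv)⟩
    have := Finset.eq_of_subset_of_card_le hsub (hmin F' hF')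
    rwa [this] at hcard
  · obtain ⟨e, he, hev⟩ : ∃ e ∈ F, inc s t e v ≠ 0 := by
      by_contra! hne
      rw [Finset.sum_eq_zero hne] at hdeg
      omega
    have hsum := Finset.add_sum_erase F (fun e => inc s t e v) he
    simp only [hdeg] at hsum
    have hz : ∑ e' ∈ F.erase e, inc s t e' v = 0 := by omega
    obtain ⟨hst, hv'⟩ := inc_pos.1 (Nat.pos_of_ne_zero hev)
    have hclus : IsPCClustering s t c φ (F.erase e) := by
      refine ⟨(Finset.sum_le_sum_of_subset_of_nonneg (Finset.erase_subset _ _)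
        fun e _ _ => hc e).trans hF.1, fun H => ?_⟩
      obtain ⟨B, hB, hB'⟩ := hF.2 H
      refine ⟨insert v B, ?_, fun u w hu hw huw => ?_⟩
      · by_cases hvB : v ∈ B
        · rwa [Finset.insert_eq_of_mem hvB]
        · rwa [Finset.sum_insert hvB, hv, zero_add]
      · rw [Finset.mem_insert, not_or] at hu hw
        have h1 := hB' u w hu.2 hw.2 huw
        -- retract the leaf `v` to its neighbour
        have h2 := h1.lift (conn_equiv (s := s) (t := t) (F.erase e))
          (fun x => if x = v then (if s e = v then t e else s e) else x) (fun e' he' => by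
            by_cases hee : e' = e
            · subst hee
              have : (if s e' = v then (if s e' = v then t e' else s e') else s e')
                  = (if t e' = v then (if s e' = v then t e' else s e') else t e') := by
                grind
              rw [this]
              exact (conn_equiv _).refl _
            · have hmem : e' ∈ F.erase e := Finset.mem_erase.2 ⟨hee, he'⟩
              have h0 : ¬ 0 < inc s t e' v := by
                have := Finset.sum_eq_zero_iff.1 hz e' hmem
                omega
              rw [inc_pos] at h0
              by_cases hl : s e' = t e'
              · rw [hl]
                exact (conn_equiv _).refl _
              · have h3 : s e' ≠ v := fun h => h0 ⟨hl, Or.inl h⟩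
                have h4 : t e' ≠ v := fun h => h0 ⟨hl, Or.inr h⟩
                rw [if_neg h3, if_neg h4]
                exact conn_edge hmem)
        simpa [hu.1, hw.1] using h2
    have := hmin _ hclus
    rw [Finset.card_erase_of_mem he] at this
    have := Finset.card_pos.2 ⟨e, he⟩
    omega

/-- Contraction step: a clustering after contracting the zero-length edge `e` yields one before. -/
lemma contract_step [Fintype W] {c : E → ℝ} {φ : W → ℝ} {e : E} (hce : c e = 0)
    {p : W → W} (hp : p = fun w => if w = t e then s e else w)
    (h : ∃ F, IsPCClustering (fun e' => p (s e')) (fun e' => p (t e')) c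
      (fun w => ∑ v with p v = w, φ v) F) :
    ∃ F, IsPCClustering s t c φ F := by
  obtain ⟨F, hF, hF'⟩ := h
  refine ⟨insert e F, ?_, fun H => ?_⟩
  · have hsum : ∑ w, ∑ v with p v = w, φ v = ∑ v, φ v := by
      convert Finset.sum_fiberwise Finset.univ p φ
    simp only [hsum] at hF
    by_cases heF : e ∈ F
    · rwa [Finset.insert_eq_of_mem heF]
    · rwa [Finset.sum_insert heF, hce, zero_add]
  · obtain ⟨B, hB, hB'⟩ := hF' H
    refine ⟨Finset.univ.filter fun v => p v ∈ B, ?_, fun u v hu hv huv => ?_⟩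
    · refine le_of_eq_of_le ?_ hB
      rw [← Finset.sum_fiberwise_of_maps_to (s := Finset.univ.filter fun v => p v ∈ B) (t := B)
        (g := p) (by simp)]
      refine Finset.sum_congr rfl fun w hw => Finset.sum_congr ?_ fun _ _ => rfl
      ext v
      simp only [Finset.mem_filter, Finset.mem_univ, true_and]
      constructor
      · exact fun h => h.2
      · exact fun h => ⟨h ▸ hw, h⟩
    · have h1 : Conn (fun e' => p (s e')) (fun e' => p (t e')) H (p u) (p v) :=
        huv.lift (conn_equiv (s := fun e' => p (s e')) (t := fun e' => p (t e')) H) p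
          fun e' he' => conn_edge (s := fun e' => p (s e')) (t := fun e' => p (t e')) he'
      have h2 := hB' _ _ (by simpa using hu) (by simpa using hv) h1
      have eqv := conn_equiv (s := s) (t := t) (insert e F)
      have hpw : ∀ w, Conn s t (insert e F) w (p w) := by
        intro w
        rw [hp]
        by_cases hw : w = t e
        · simp only [hw, if_true]
          exact eqv.symm (conn_edge (Finset.mem_insert_self _ _))
        · simp only [hw, if_false]
          exact eqv.refl _
      have h3 : Conn s t (insert e F) (p u) (p v) := by
        refine h2.lift eqv (fun x : W => x) fun e' he' => ?_
        exact eqv.trans (eqv.symm (hpw _)) (eqv.trans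
          (conn_edge (Finset.mem_insert_of_mem he')) (hpw _))
      exact eqv.trans (hpw u) (eqv.trans h3 (eqv.symm (hpw v)))

/-- Growth step: growing a moat of width `δ` around each vertex of positive potential. The
clustering of the reduced instance, when pruned, costs at most `2 δ` more per such vertex. -/
lemma grow_step [Fintype W] [Fintype E] {c : E → ℝ} {φ : W → ℝ} {A : Finset W}
    (hφ : ∀ v ∉ A, φ v = 0) {δ : ℝ} (hδ : 0 ≤ δ)
    (hc' : ∀ e, 0 ≤ c e - δ * ∑ v ∈ A, (inc s t e v : ℝ))
    (hφ' : ∀ v, 0 ≤ φ v - if v ∈ A then δ else 0)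
    (h : ∃ F, IsPCClustering s t (fun e => c e - δ * ∑ v ∈ A, (inc s t e v : ℝ))
      (fun v => φ v - if v ∈ A then δ else 0) F) :
    ∃ F, IsPCClustering s t c φ F := by
  obtain ⟨F, ⟨hF, hF'⟩, hforest, hleaf⟩ := exists_pruned hc' h
  have hdeg := sum_degree_le F A hforest fun v hv => hleaf v (by simp [hφ v hv, hv])
  have hc (H : Finset E) : ∑ e ∈ H, c e = ∑ e ∈ H, (c e - δ * ∑ v ∈ A, (inc s t e v : ℝ))
      + δ * ((∑ v ∈ A, ∑ e ∈ H, inc s t e v : ℕ) : ℝ) := by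
    push_cast
    rw [Finset.sum_sub_distrib, ← Finset.mul_sum, Finset.sum_comm]
    ring
  have hφs (S : Finset W) : ∑ v ∈ S, φ v = ∑ v ∈ S, (φ v - if v ∈ A then δ else 0)
      + δ * ((S ∩ A).card : ℝ) := by
    rw [Finset.sum_sub_distrib, Finset.sum_ite_mem, Finset.sum_const, nsmul_eq_mul]
    ring
  refine ⟨F, ?_, fun H => ?_⟩
  · rw [hc, hφs, Finset.univ_inter]
    have : ((∑ v ∈ A, ∑ e ∈ F, inc s t e v : ℕ) : ℝ) ≤ 2 * A.card := by exact_mod_cast hdeg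
    nlinarith
  · obtain ⟨B, hB, hB'⟩ := hF' H
    refine ⟨B.filter fun v => ∑ e ∈ H, inc s t e v ≠ 0, ?_, fun u v hu hv huv => ?_⟩
    · rw [hc, hφs]
      refine add_le_add ((Finset.sum_le_sum_of_subset_of_nonneg (Finset.filter_subset _ _)
        fun v _ _ => hφ' v).trans hB) (mul_le_mul_of_nonneg_left ?_ hδ)
      norm_cast
      rw [Finset.card_eq_sum_ones]
      refine le_trans (Finset.sum_le_sum fun v hv => ?_)
        (Finset.sum_le_sum_of_subset (f := fun v => ∑ e ∈ H, inc s t e v)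
          (Finset.inter_subset_right (s₁ := B.filter fun v => ∑ e ∈ H, inc s t e v ≠ 0)))
      exact Nat.one_le_iff_ne_zero.2 (Finset.mem_filter.1 (Finset.mem_inter.1 hv).1).2
    · have eqv := conn_equiv (s := s) (t := t) F
      by_cases hu0 : ∑ e ∈ H, inc s t e u = 0
      · rw [huv.eq_of_isolated hu0]; exact eqv.refl _
      by_cases hv0 : ∑ e ∈ H, inc s t e v = 0
      · rw [((conn_equiv H).symm huv : Conn s t H v u).eq_of_isolated hv0]; exact eqv.refl _
      exact hB' u v (fun h => hu (Finset.mem_filter.2 ⟨h, hu0⟩))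
        (fun h => hv (Finset.mem_filter.2 ⟨h, hv0⟩)) huv

/-- Existence of prize-collecting clusterings, by induction on the number of non-loops, then on
the number of vertices of positive potential plus the number of edges of positive length. -/
lemma exists_pcClustering_aux [Fintype W] [Fintype E] (n : ℕ) : ∀ (m : ℕ) (s t : E → W)
    (c : E → ℝ) (φ : W → ℝ), (∀ e, 0 ≤ c e) → (∀ v, 0 ≤ φ v) →
    (Finset.univ.filter fun e => s e ≠ t e).card < n →
    (Finset.univ.filter fun v => 0 < φ v).card + (Finset.univ.filter fun e => 0 < c e).card < m →
    ∃ F, IsPCClustering s t c φ F := by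
  induction n with
  | zero => intro m s t c φ _ _ h; omega
  | succ n ihn =>
    intro m
    induction m with
    | zero => intro s t c φ _ _ _ h; omega
    | succ m ihm =>
      intro s t c φ hc hφ hn hm
      by_cases hz : ∃ e, s e ≠ t e ∧ c e = 0
      · obtain ⟨e, hst, hce⟩ := hz
        refine contract_step hce rfl (ihn _ _ _ _ _ hc
          (fun w => Finset.sum_nonneg fun v _ => hφ v) ?_ (Nat.lt_succ_self _))
        refine lt_of_lt_of_le (Finset.card_lt_card ?_) (Nat.lt_succ_iff.1 hn)
        refine Finset.ssubset_iff_of_subset ?_ |>.2 ⟨e, by simpa using hst, by simp⟩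
        intro e' he'
        simp only [Finset.mem_filter, Finset.mem_univ, true_and] at he' ⊢
        exact fun h => he' (by rw [h])
      · push Not at hz
        have hpos : ∀ e, s e ≠ t e → 0 < c e := fun e he => (hc e).lt_of_ne' (hz e he)
        set A : Finset W := Finset.univ.filter fun v => 0 < φ v with hA
        have hA0 : ∀ v ∉ A, φ v = 0 := fun v hv => by
          simp only [hA, Finset.mem_filter, Finset.mem_univ, true_and, not_lt] at hv
          exact le_antisymm hv (hφ v)
        rcases A.eq_empty_or_nonempty with hAe | ⟨v₀, hv₀⟩
        · have h0 : ∀ v, φ v = 0 := fun v => hA0 v (by simp [hAe])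
          refine ⟨∅, by simp [h0], fun H => ⟨Finset.univ, ?_, by simp⟩⟩
          simpa [h0] using Finset.sum_nonneg fun e _ => hc e
        -- `δ` is the time of the first event: a potential is used up or an edge becomes tight
        set k : E → ℝ := fun e => ∑ v ∈ A, (inc s t e v : ℝ) with hk
        have hk0 : ∀ e, 0 ≤ k e := fun e => Finset.sum_nonneg fun v _ => Nat.cast_nonneg _
        have hkpos : ∀ e, 0 < k e → 0 < c e := by
          intro e he
          refine hpos e fun hst => ?_
          simp [hk, inc, hst] at he
        set S : Finset ℝ := A.image φ ∪
          (Finset.univ.filter fun e => 0 < k e).image fun e => c e / k e with hS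
        have hSne : S.Nonempty := ⟨φ v₀, by
          rw [hS]; exact Finset.mem_union_left _ (Finset.mem_image_of_mem _ hv₀)⟩
        obtain ⟨δ, hδS, hδmin⟩ := S.exists_min_image id hSne
        simp only [id] at hδmin
        have hδφ : ∀ v ∈ A, δ ≤ φ v := fun v hv => hδmin _
          (Finset.mem_union_left _ (Finset.mem_image_of_mem _ hv))
        have hδc : ∀ e, 0 < k e → δ ≤ c e / k e := fun e he => hδmin _
          (Finset.mem_union_right _ (Finset.mem_image_of_mem (fun e => c e / k e) (by simpa using he)))
        have hδ0 : 0 < δ := by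
          rcases Finset.mem_union.1 hδS with h | h
          · obtain ⟨v, hv, rfl⟩ := Finset.mem_image.1 h
            exact (Finset.mem_filter.1 hv).2
          · obtain ⟨e, he, rfl⟩ := Finset.mem_image.1 h
            have he := (Finset.mem_filter.1 he).2
            exact div_pos (hkpos e he) he
        have hc' : ∀ e, 0 ≤ c e - δ * k e := by
          intro e
          rcases (hk0 e).eq_or_lt with h | h
          · rw [← h]; simpa using hc e
          · have := (le_div_iff₀ h).1 (hδc e h)
            linarith
        have hφ' : ∀ v, 0 ≤ φ v - if v ∈ A then δ else 0 := by
          intro v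
          split_ifs with h
          · have := hδφ v h; linarith
          · simpa using hφ v
        refine grow_step hA0 hδ0.le hc' hφ' (ihm s t _ _ hc' hφ' hn ?_)
        have hsubA : (Finset.univ.filter fun v => 0 < φ v - if v ∈ A then δ else 0) ⊆ A := by
          intro v hv
          by_contra hvA
          simp [hvA, hA0 v hvA] at hv
        have hsubE : (Finset.univ.filter fun e => 0 < c e - δ * k e)
            ⊆ Finset.univ.filter fun e => 0 < c e := by
          intro e he
          simp only [Finset.mem_filter, Finset.mem_univ, true_and] at he ⊢
          have := mul_nonneg hδ0.le (hk0 e)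
          linarith
        have hleA := Finset.card_le_card hsubA
        have hleE := Finset.card_le_card hsubE
        refine lt_of_lt_of_le ?_ (Nat.lt_succ_iff.1 hm)
        rcases Finset.mem_union.1 hδS with h | h
        · obtain ⟨v, hv, hvδ⟩ := Finset.mem_image.1 h
          have := Finset.card_lt_card
            ((Finset.ssubset_iff_of_subset hsubA).2 ⟨v, hv, by simp [hv, hvδ]⟩)
          exact add_lt_add_of_lt_of_le this hleE
        · obtain ⟨e, he, heδ⟩ := Finset.mem_image.1 h
          have he := (Finset.mem_filter.1 he).2
          have := Finset.card_lt_card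
            ((Finset.ssubset_iff_of_subset hsubE).2 ⟨e, by simpa using hkpos e he, by
              have : c e - δ * k e = 0 := by rw [← heδ, div_mul_cancel₀ _ he.ne', sub_self]
              simp only [Finset.mem_filter, this, lt_irrefl, and_false, not_false_eq_true]⟩)
          exact add_lt_add_of_le_of_lt hleA this

lemma exists_pcClustering [Fintype W] [Fintype E] (s t : E → W) {c : E → ℝ} {φ : W → ℝ}
    (hc : ∀ e, 0 ≤ c e) (hφ : ∀ v, 0 ≤ φ v) : ∃ F, IsPCClustering s t c φ F :=
  exists_pcClustering_aux _ _ s t c φ hc hφ (Nat.lt_succ_self _) (Nat.lt_succ_self _)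

end Multigraph

/-! ### Lengths and reachability in subgraphs -/

lemma sgLength_eq {G : SimpleGraph V} (c : Sym2 V → ℝ) (H : G.Subgraph) :
    sgLength c H = ∑ e : G.edgeSet, if e.1 ∈ H.edgeSet then c e.1 else 0 := by
  unfold sgLength
  rw [← Finset.sum_filter]
  symm
  refine Finset.sum_bij (fun e _ => e.1) ?_ ?_ ?_ ?_
  · intro e he; simpa using he
  · intro a _ b _ h; exact Subtype.ext h
  · intro e he
    have he' : e ∈ H.edgeSet := by simpa using he
    exact ⟨⟨e, H.edgeSet_subset he'⟩, by simpa using he', rfl⟩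
  · intros; rfl

lemma sgLength_nonneg {G : SimpleGraph V} {c : Sym2 V → ℝ} (hc : ∀ e ∈ G.edgeSet, 0 ≤ c e)
    (H : G.Subgraph) : 0 ≤ sgLength c H :=
  Finset.sum_nonneg fun e he => hc e (H.edgeSet_subset (by simpa using he))

/-- A quantity charged only under mutually exclusive conditions is charged at most once. -/
lemma sum_ite_le_ite {ι : Type*} (S : Finset ι) {P : ι → Prop} {Q : Prop}
    [DecidablePred P] [Decidable Q] {x : ℝ} (hx : 0 ≤ x)
    (hPQ : ∀ i, P i → Q) (hP : ∀ i j, P i → P j → i = j) :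
    (∑ i ∈ S, if P i then x else 0) ≤ if Q then x else 0 := by
  by_cases h : ∃ i ∈ S, P i
  · obtain ⟨i, hi, hPi⟩ := h
    rw [Finset.sum_eq_single_of_mem i hi fun j _ hj => if_neg fun hPj => hj (hP j i hPj hPi)]
    rw [if_pos hPi, if_pos (hPQ i hPi)]
  · push Not at h
    rw [Finset.sum_eq_zero fun i hi => if_neg (h i hi)]
    split_ifs <;> simp [hx]

lemma reachable_of_step {A A' : SimpleGraph V} {r z : V}
    (h : ∀ a b, A.Reachable r a → A.Adj a b → A'.Adj a b) (hz : A.Reachable r z) :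
    A'.Reachable r z := by
  have hz' := (SimpleGraph.reachable_iff_reflTransGen _ _).1 hz
  induction hz' with
  | refl => exact SimpleGraph.Reachable.refl _
  | tail hab hbc ih =>
    have hb := (SimpleGraph.reachable_iff_reflTransGen _ _).2 hab
    exact (ih hb).trans (h _ _ hb hbc).reachable

lemma steinerForest_le {G : SimpleGraph V} {c : Sym2 V → ℝ} (hc : ∀ e ∈ G.edgeSet, 0 ≤ c e)
    {D : Finset (V × V)} {S : G.Subgraph} (hS : ∀ d ∈ D, Satisfies S d) :
    SteinerForest G c D ≤ sgLength c S := by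
  refine csInf_le ⟨0, ?_⟩ ⟨S, hS, rfl⟩
  rintro x ⟨R, -, rfl⟩
  exact sgLength_nonneg hc R

/-- There are finitely many subgraphs, so the infimum defining `SteinerForest` is attained. -/
lemma exists_steinerForest_eq {G : SimpleGraph V} (c : Sym2 V → ℝ)
    {D : Finset (V × V)} {S : G.Subgraph} (hS : ∀ d ∈ D, Satisfies S d) :
    ∃ H : G.Subgraph, (∀ d ∈ D, Satisfies H d) ∧ SteinerForest G c D = sgLength c H := by
  have hfin : Set.Finite {x | ∃ F : G.Subgraph, (∀ d ∈ D, Satisfies F d) ∧ x = sgLength c F} := by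
    refine (Set.finite_range fun F : G.Subgraph => sgLength c F).subset ?_
    rintro x ⟨F, -, rfl⟩
    exact ⟨F, rfl⟩
  have hne : Set.Nonempty
      {x | ∃ F : G.Subgraph, (∀ d ∈ D, Satisfies F d) ∧ x = sgLength c F} := ⟨_, S, hS, rfl⟩
  exact hne.csInf_mem hfin

/-- The component `K` of a graph `M' ≤ G`, as a subgraph of `G`. -/
def componentSubgraph {G M' : SimpleGraph V} (h : M' ≤ G) (K : M'.ConnectedComponent) :
    G.Subgraph where
  verts := K.supp
  Adj a b := M'.Adj a b ∧ a ∈ K.supp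
  adj_sub hab := h hab.1
  edge_vert hab := hab.2
  symm := ⟨fun _ _ hab => ⟨hab.1.symm, (K.mem_supp_congr_adj hab.1).1 hab.2⟩⟩

lemma componentSubgraph_connected {G M' : SimpleGraph V} (h : M' ≤ G)
    (K : M'.ConnectedComponent) : (componentSubgraph h K).Connected := by
  have heq : (componentSubgraph h K).coe = K.toSimpleGraph := by
    ext a b
    exact ⟨fun hab => hab.1, fun hab => ⟨hab, a.2⟩⟩
  exact ⟨heq ▸ K.connected_toSimpleGraph⟩

lemma componentSubgraph_isAcyclic {G M' : SimpleGraph V} (h : M' ≤ G) (hM' : M'.IsAcyclic)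
    (K : M'.ConnectedComponent) : (componentSubgraph h K).spanningCoe.IsAcyclic :=
  hM'.anti fun _ _ hab => hab.1

lemma exists_spanningForest (M : SimpleGraph V) :
    ∃ M' ≤ M, M'.IsAcyclic ∧ M'.Reachable = M.Reachable := by
  obtain ⟨M', -, hmax⟩ := Finite.exists_le_maximal (p := fun H => H ≤ M ∧ H.IsAcyclic)
    (a := (⊥ : SimpleGraph V)) ⟨bot_le, SimpleGraph.isAcyclic_bot⟩
  exact ⟨M', hmax.prop.1, hmax.prop.2, M.reachable_eq_of_maximal_isAcyclic M' hmax⟩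

/-! ### Clustering the trees of a forest -/

/-- The version of the result with the trees indexed by the components of a forest. The last clause
splits a subgraph `H` among the trees: every demand satisfied by both `F` and `H` is satisfied by
the part belonging to the tree that contains the demand. -/
lemma exists_trees (G : SimpleGraph V) (c : Sym2 V → ℝ) (hc : ∀ e ∈ G.edgeSet, 0 ≤ c e)
    (F : G.Subgraph) (ε : ℝ) (hε : 0 < ε) :
    ∃ (M' : SimpleGraph V) (hM' : M' ≤ G), M'.IsAcyclic ∧
      (∀ u v, F.spanningCoe.Reachable u v → M'.Reachable u v) ∧
      (∑ K, sgLength c (componentSubgraph hM' K)) ≤ (2 / ε + 1) * sgLength c F ∧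
      ∀ H : G.Subgraph, ∃ S : M'.ConnectedComponent → G.Subgraph,
        (∑ K, sgLength c (S K)) ≤ (1 + ε) * sgLength c H ∧
        ∀ d, Satisfies F d → Satisfies H d → Satisfies (S (M'.connectedComponentMk d.1)) d := by
  have hend : ∀ e : G.edgeSet, ∃ a b, e.1 = s(a, b) := fun e =>
    Sym2.inductionOn e.1 fun a b => ⟨a, b, rfl⟩
  choose x y hxy using hend
  set p : V → F.spanningCoe.ConnectedComponent := F.spanningCoe.connectedComponentMk with hp
  have hpadj : ∀ a b, F.Adj a b → p a = p b := fun a b hab =>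
    SimpleGraph.ConnectedComponent.sound (SimpleGraph.Adj.reachable (G := F.spanningCoe) hab)
  have hc0 : ∀ e : G.edgeSet, 0 ≤ c e.1 := fun e => hc _ e.2
  -- each tree of `F`, contracted to a point, receives its length divided by `ε` as potential
  set φ : F.spanningCoe.ConnectedComponent → ℝ := fun K =>
    ∑ e : G.edgeSet, if e.1 ∈ F.edgeSet ∧ p (x e) = K then c e.1 / ε else 0 with hφ
  have hφ0 : ∀ K, 0 ≤ φ K := fun K => Finset.sum_nonneg fun e _ => by
    split_ifs
    exacts [div_nonneg (hc0 e) hε.le, le_rfl]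
  have hφsum : ∑ K, φ K ≤ sgLength c F / ε := by
    rw [hφ, Finset.sum_comm, sgLength_eq, Finset.sum_div]
    refine Finset.sum_le_sum fun e _ => ?_
    refine (sum_ite_le_ite _ (div_nonneg (hc0 e) hε.le) (fun _ h => h.1)
      fun i j hi hj => hi.2.symm.trans hj.2).trans (le_of_eq ?_)
    split_ifs <;> simp
  obtain ⟨F₂, hF₂, hclus⟩ := exists_pcClustering (fun e => p (x e)) (fun e => p (y e))
    (c := fun e : G.edgeSet => c e.1) hc0 hφ0
  set M : SimpleGraph V := F.spanningCoe ⊔ SimpleGraph.fromEdgeSet {z | ∃ e ∈ F₂, e.1 = z} with hM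
  have hMe : ∀ e ∈ M.edgeSet, e ∈ F.edgeSet ∨ ∃ e' ∈ F₂, e'.1 = e := by
    intro e he
    rw [hM, SimpleGraph.edgeSet_sup] at he
    rcases he with he | he
    · left; simpa using he
    · right
      rw [SimpleGraph.edgeSet_fromEdgeSet] at he
      exact he.1
  have hMG : M ≤ G := by
    rw [← SimpleGraph.edgeSet_subset_edgeSet]
    intro e he
    rcases hMe e he with h | ⟨e', -, rfl⟩
    · exact F.edgeSet_subset h
    · exact e'.2
  have hFM : F.spanningCoe ≤ M := le_sup_left
  -- the trees connected by the clustering lie in one component of `M`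
  have hconn : ∀ u v, Conn (fun e => p (x e)) (fun e => p (y e)) F₂ (p u) (p v) →
      M.Reachable u v := by
    intro u v huv
    have := huv.lift (R := Eq) ⟨fun _ => rfl, Eq.symm, Eq.trans⟩
      (fun K => K.map (SimpleGraph.Hom.ofLE hFM)) (fun e he => by
        refine SimpleGraph.ConnectedComponent.sound (SimpleGraph.Adj.reachable ?_)
        change M.Adj (x e) (y e)
        rw [hM, SimpleGraph.sup_adj, SimpleGraph.fromEdgeSet_adj]
        have hG : G.Adj (x e) (y e) := by
          rw [← SimpleGraph.mem_edgeSet, ← hxy]; exact e.2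
        exact Or.inr ⟨⟨e, he, hxy e⟩, hG.ne⟩)
    exact SimpleGraph.ConnectedComponent.exact this
  obtain ⟨M', hM'M, hacyc, hreach⟩ := exists_spanningForest M
  refine ⟨M', hM'M.trans hMG, hacyc, fun u v huv => hreach ▸ huv.mono hFM, ?_, fun H => ?_⟩
  · have h1 : (∑ K, sgLength c (componentSubgraph (hM'M.trans hMG) K)) ≤
        ∑ e : G.edgeSet, if e.1 ∈ M'.edgeSet then c e.1 else 0 := by
      simp only [sgLength_eq]
      rw [Finset.sum_comm]
      refine Finset.sum_le_sum fun e _ => sum_ite_le_ite _ (hc0 e) ?_ ?_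
      · intro K hK
        rw [hxy e] at hK ⊢
        exact hK.1
      · intro K K' hK hK'
        rw [hxy e] at hK hK'
        exact hK.2.symm.trans hK'.2
    have h2 : (∑ e : G.edgeSet, if e.1 ∈ M'.edgeSet then c e.1 else 0) ≤
        sgLength c F + ∑ e ∈ F₂, c e.1 := by
      have h3 : ∑ e ∈ F₂, c e.1 = ∑ e : G.edgeSet, if e ∈ F₂ then c e.1 else 0 := by
        rw [Finset.sum_ite_mem, Finset.univ_inter]
      rw [h3, sgLength_eq, ← Finset.sum_add_distrib]
      refine Finset.sum_le_sum fun e _ => ?_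
      have h4 : e.1 ∈ M'.edgeSet → e.1 ∈ F.edgeSet ∨ e ∈ F₂ := by
        intro he
        rcases hMe _ (SimpleGraph.edgeSet_subset_edgeSet.2 hM'M he) with h | ⟨e', he', heq⟩
        · exact Or.inl h
        · exact Or.inr (Subtype.ext heq ▸ he')
      have := hc0 e
      split_ifs <;> first | linarith | (exfalso; tauto)
    have h5 : (2 / ε + 1) * sgLength c F = sgLength c F + 2 * (sgLength c F / ε) := by ring
    linarith
  · set Hf : Finset G.edgeSet := Finset.univ.filter fun e => e.1 ∈ H.edgeSet with hHf
    have hHf_sum : ∑ e ∈ Hf, c e.1 = sgLength c H := by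
      rw [sgLength_eq, hHf, Finset.sum_filter]
    obtain ⟨B, hB, hB'⟩ := hclus Hf
    rw [hHf_sum] at hB
    have hHconn : ∀ u v, H.spanningCoe.Reachable u v →
        Conn (fun e => p (x e)) (fun e => p (y e)) Hf (p u) (p v) := by
      intro u v huv
      have eqv := conn_equiv (s := fun e => p (x e)) (t := fun e => p (y e)) Hf
      have := (SimpleGraph.reachable_iff_reflTransGen _ _).1 huv
      induction this with
      | refl => exact eqv.refl _
      | @tail b b' hab hbc ih =>
        refine eqv.trans (ih ((SimpleGraph.reachable_iff_reflTransGen _ _).2 hab)) ?_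
        have hbc' : H.Adj b b' := hbc
        set e : G.edgeSet := ⟨s(b, b'), H.adj_sub hbc'⟩ with he
        have hee : e ∈ Hf := by simpa [hHf, he] using hbc'
        have h1 : Conn (fun e => p (x e)) (fun e => p (y e)) Hf (p (x e)) (p (y e)) :=
          conn_edge (s := fun e => p (x e)) (t := fun e => p (y e)) hee
        have h2 : s(b, b') = s(x e, y e) := hxy e
        rcases Sym2.eq_iff.1 h2 with ⟨h, h'⟩ | ⟨h, h'⟩
        · rwa [← h, ← h'] at h1
        · rw [← h, ← h'] at h1; exact eqv.symm h1
    have hsame : ∀ u v, p u ∉ B → p v ∉ B → H.spanningCoe.Reachable u v →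
        M'.connectedComponentMk u = M'.connectedComponentMk v := by
      intro u v hu hv huv
      refine SimpleGraph.ConnectedComponent.sound ?_
      rw [hreach]
      exact hconn u v (hB' _ _ hu hv (hHconn u v huv))
    -- Cluster `K` receives the trees of `F` in `K` that lie in `B`, and the components of `H` that
    -- touch a tree in `K` outside `B`.
    set S : M'.ConnectedComponent → G.Subgraph := fun K =>
      { verts := Set.univ
        Adj := fun a b =>
          (H.Adj a b ∧ ∃ u, p u ∉ B ∧ H.spanningCoe.Reachable a u ∧
            M'.connectedComponentMk u = K) ∨
          (F.Adj a b ∧ p a ∈ B ∧ M'.connectedComponentMk a = K)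
        adj_sub := fun h => h.elim (fun h => H.adj_sub h.1) (fun h => F.adj_sub h.1)
        edge_vert := fun _ => Set.mem_univ _
        symm := ⟨fun a b h => by
          rcases h with ⟨hab, u, hu, hr, hK⟩ | ⟨hab, ha, hK⟩
          · refine Or.inl ⟨hab.symm, u, hu, SimpleGraph.Reachable.trans ?_ hr, hK⟩
            exact SimpleGraph.Adj.reachable (G := H.spanningCoe) hab.symm
          · refine Or.inr ⟨hab.symm, hpadj a b hab ▸ ha, ?_⟩
            rw [← hK]
            refine SimpleGraph.ConnectedComponent.sound ?_
            rw [hreach]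
            exact (SimpleGraph.Adj.reachable (hFM hab)).symm⟩ } with hS
    refine ⟨S, ?_, fun d hdF hdH => ?_⟩
    · have h1 : (∑ K, sgLength c (S K)) ≤ ∑ K, ∑ e : G.edgeSet,
          ((if e.1 ∈ H.edgeSet ∧ ∃ u, p u ∉ B ∧ H.spanningCoe.Reachable (x e) u ∧
            M'.connectedComponentMk u = K then c e.1 else 0) +
          (if e.1 ∈ F.edgeSet ∧ p (x e) ∈ B ∧ M'.connectedComponentMk (x e) = K
            then c e.1 else 0)) := by
        refine Finset.sum_le_sum fun K _ => ?_
        rw [sgLength_eq]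
        refine Finset.sum_le_sum fun e _ => ?_
        have h2 : e.1 ∈ (S K).edgeSet → (e.1 ∈ H.edgeSet ∧ ∃ u, p u ∉ B ∧
            H.spanningCoe.Reachable (x e) u ∧ M'.connectedComponentMk u = K) ∨
            (e.1 ∈ F.edgeSet ∧ p (x e) ∈ B ∧ M'.connectedComponentMk (x e) = K) := by
          rw [hxy e]
          exact id
        have := hc0 e
        split_ifs <;> first | linarith | (rcases h2 ‹_› with h | h <;> contradiction)
      have h3 : ε * ∑ K ∈ B, φ K = ∑ e : G.edgeSet,
          if e.1 ∈ F.edgeSet ∧ p (x e) ∈ B then c e.1 else 0 := by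
        rw [hφ, Finset.sum_comm, Finset.mul_sum]
        refine Finset.sum_congr rfl fun e _ => ?_
        by_cases heF : e.1 ∈ F.edgeSet
        · simp only [heF, true_and, Finset.sum_ite_eq]
          split_ifs
          · field_simp
          · simp
        · simp [heF]
      refine h1.trans ?_
      rw [Finset.sum_comm]
      simp only [Finset.sum_add_distrib]
      rw [add_mul, one_mul]
      refine add_le_add ?_ (le_trans ?_ (mul_le_mul_of_nonneg_left hB hε.le))
      · rw [sgLength_eq]
        refine Finset.sum_le_sum fun e _ => sum_ite_le_ite _ (hc0 e) (fun _ h => h.1) ?_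
        rintro K K' ⟨-, u, hu, hr, rfl⟩ ⟨-, u', hu', hr', rfl⟩
        exact hsame u u' hu hu' (hr.symm.trans hr')
      · rw [h3]
        refine Finset.sum_le_sum fun e _ => sum_ite_le_ite _ (hc0 e) (fun _ h => ⟨h.1, h.2.1⟩) ?_
        intro K K' h h'
        exact h.2.2.symm.trans h'.2.2
    · by_cases hd : p d.1 ∈ B
      · refine reachable_of_step (fun a b hra hab => Or.inr ⟨hab, ?_, ?_⟩) hdF
        · have heq : p d.1 = p a := SimpleGraph.ConnectedComponent.sound hra
          exact heq ▸ hd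
        · refine SimpleGraph.ConnectedComponent.sound ?_
          rw [hreach]
          exact (hra.mono hFM).symm
      · exact reachable_of_step (fun a b hra hab => Or.inl ⟨hab, d.1, hd, hra.symm, rfl⟩) hdH

/--
Let `(G, 𝒟, π)` be an instance of Submodular Prize-Collecting
Steiner Forest, `F` a forest in `G` satisfying all the demands, and `ε > 0`.
Then there exist trees `T̂_1, …, T̂_k` and a partition `{𝒟_1, …, 𝒟_k}` of `𝒟`
such that (1) `𝒟 = ⋃ 𝒟_i`; (2) `T̂_i` spans the endpoints of every demand in `𝒟_i`;
(3) `∑ length(T̂_i) ≤ (2/ε + 1)·length(F)`; and (4) for any minimum-cost subgraph,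
with `𝒟*` its satisfied demands and `𝒟*_i := 𝒟* ∩ 𝒟_i`,
`∑_i SteinerForest(G, 𝒟*_i) ≤ (1 + ε)·SteinerForest(G, 𝒟*)`.
-/
theorem stmt_6 (G : SimpleGraph V) (c : Sym2 V → ℝ) (hc : ∀ e ∈ G.edgeSet, 0 ≤ c e)
    (𝒟 : Finset (V × V)) (π : Finset (V × V) → ℝ)
    (hπ : ∀ D ⊆ 𝒟, 0 ≤ π D)
    (hmono : ∀ A B : Finset (V × V), A ⊆ B → B ⊆ 𝒟 → π A ≤ π B)
    (hsub : ∀ A B : Finset (V × V), A ⊆ 𝒟 → B ⊆ 𝒟 →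
      π (A ∪ B) + π (A ∩ B) ≤ π A + π B)
    (F : G.Subgraph) (hFforest : F.spanningCoe.IsAcyclic)
    (hFsat : ∀ d ∈ 𝒟, Satisfies F d)
    (ε : ℝ) (hε : 0 < ε) :
    ∃ (k : ℕ) (T : Fin k → G.Subgraph) (Dp : Fin k → Finset (V × V)),
      (∀ i, (T i).Connected ∧ (T i).spanningCoe.IsAcyclic) ∧
      (𝒟 = Finset.univ.biUnion Dp) ∧
      (∀ i j, i ≠ j → Disjoint (Dp i) (Dp j)) ∧
      (∀ i, ∀ d ∈ Dp i, d.1 ∈ (T i).verts ∧ d.2 ∈ (T i).verts) ∧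
      (∑ i, sgLength c (T i)) ≤ (2 / ε + 1) * sgLength c F ∧
      (∀ Fopt : G.Subgraph,
        (∀ F' : G.Subgraph, cost G c 𝒟 π Fopt ≤ cost G c 𝒟 π F') →
        (∑ i, SteinerForest G c ((𝒟.filter fun d => Satisfies Fopt d) ∩ Dp i)) ≤
          (1 + ε) * SteinerForest G c (𝒟.filter fun d => Satisfies Fopt d)) := by
  obtain ⟨M', hM', hacyc, hFM', hlen, hSF⟩ := exists_trees G c hc F ε hε
  set f := (Fintype.equivFin M'.ConnectedComponent).symm with hf
  refine ⟨Fintype.card M'.ConnectedComponent, fun i => componentSubgraph hM' (f i),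
    fun i => 𝒟.filter fun d => M'.connectedComponentMk d.1 = f i,
    fun i => ⟨componentSubgraph_connected _ _, componentSubgraph_isAcyclic _ hacyc _⟩,
    ?_, fun i j hij => ?_, fun i d hd => ?_, ?_, fun Fopt _ => ?_⟩
  · ext d
    simp only [Finset.mem_biUnion, Finset.mem_univ, true_and, Finset.mem_filter]
    exact ⟨fun hd => ⟨f.symm (M'.connectedComponentMk d.1), hd, by simp⟩, fun ⟨_, hd, _⟩ => hd⟩
  · rw [Finset.disjoint_left]
    intro d hi hj
    simp only [Finset.mem_filter] at hi hj
    exact hij (f.injective (hi.2.symm.trans hj.2))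
  · simp only [Finset.mem_filter] at hd
    refine ⟨hd.2, ?_⟩
    change M'.connectedComponentMk d.2 = f i
    rw [← hd.2]
    exact SimpleGraph.ConnectedComponent.sound (hFM' _ _ (hFsat d hd.1)).symm
  · rwa [f.sum_comp (fun K => sgLength c (componentSubgraph hM' K))]
  · obtain ⟨H, hH, hHeq⟩ := exists_steinerForest_eq c
      (D := 𝒟.filter fun d => Satisfies Fopt d) (S := Fopt)
      (fun d hd => (Finset.mem_filter.1 hd).2)
    obtain ⟨S, hSlen, hS⟩ := hSF H
    rw [hHeq]
    refine le_trans ?_ hSlen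
    rw [← f.sum_comp (fun K => sgLength c (S K))]
    refine Finset.sum_le_sum fun i _ => steinerForest_le hc fun d hd => ?_
    obtain ⟨hd1, hd2⟩ := Finset.mem_inter.1 hd
    obtain ⟨hd3, hd4⟩ := Finset.mem_filter.1 hd2
    rw [← hd4]
    exact hS d (hFsat d hd3) (hH d hd1)
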